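/- Let m ≥ 2, let V_m = ℤ[x]/(Sym_{m−1}) and let I be the ideal of V_m generated by the residue class of x − 2. Then the I-adic completion of V_m is isomorphic as an abelian group to the product, over the prime divisors p of m, of δ(p,m) copies of the p-adic integers ℤ_p. (Paper's Proposition 1.1: the p-primary component of (V_m)^∧_I is (ℤ_p)^{δ(p,m)}.) -/

import Mathlib

open Polynomial

/-- The Chebyshev-like polynomials: `symPoly 0 = 1`, `symPoly 1 = X`,
`symPoly (k+2) = X * symPoly (k+1) - symPoly k`. -/
noncomputable def symPoly : ℕ → ℤ[X]
  | 0 => 1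
  | 1 => X
  | (k+2) => X * symPoly (k+1) - symPoly k

/-- `δ(p,m)`: with `i` the `p`-adic valuation of `m`, this is `2^i - 1` for `p = 2`
and `(p^i - 1)/2` for odd `p`. -/
def deltaPM (p m : ℕ) : ℕ :=
  if p = 2 then 2 ^ (m.factorization p) - 1 else (p ^ (m.factorization p) - 1) / 2

/-
Expanding at `X = a` sends `ℤ[X]/(f)` to `∏ p ∣ f(a), ℤ_[p]⟦X⟧/(f(X + a))` and `y = X - a` to `X`.
Modulo `y` this map is `ℤ/f(a) → ∏ p, ℤ_[p]/f(a)`, an isomorphism by the Chinese remainder theorem.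
As `f(a) ≠ 0`, the element `y` is regular on the target, so the map is an isomorphism modulo every
`y ^ n`; the target being `y`-adically complete, it is the completion. By Weierstrass preparation
its `p`-th factor is free over `ℤ_[p]`, of rank the multiplicity of `a` as a root of `f` mod `p`.

For `f = symPoly (m - 1)` and `a = 2` one has `f(2) = m`. Write `m = p ^ i * n` with `p ∤ n`. The
Chebyshev polynomials `C` (`C_m(t + t⁻¹) = t ^ m + t⁻ᵐ`) and `S` satisfy
`(X ^ 2 - 4) S_{m-1} ^ 2 = C_m ^ 2 - 4`, and `C_m ^ 2 - 4 = (C_n ^ 2 - 4) ^ (p ^ i)` in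
characteristic `p`. As `S_{n-1}(2) = n ≠ 0`, comparing multiplicities at `2` gives `δ(p, m)`.
-/

section AdicCompletion

variable {R M N : Type*} [CommRing R] [AddCommGroup M] [Module R M] [AddCommGroup N] [Module R N]

theorem mem_span_singleton_pow_smul_top {y : R} {n : ℕ} {x : M} :
    x ∈ (Ideal.span {y} ^ n • ⊤ : Submodule R M) ↔ ∃ z, y ^ n • z = x := by
  simp [Ideal.span_singleton_pow, Submodule.ideal_span_singleton_smul,
    Submodule.mem_smul_pointwise_iff_exists]

theorem adicCompletion_map_injective {I : Ideal R} {f : M →ₗ[R] N}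
    (hf : ∀ (n : ℕ) (x : M), f x ∈ (I ^ n • ⊤ : Submodule R N) → x ∈ (I ^ n • ⊤ : Submodule R M)) :
    Function.Injective (AdicCompletion.map I f) := by
  rw [injective_iff_map_eq_zero]
  intro x hx
  induction x using AdicCompletion.induction_on with | _ u
  refine AdicCompletion.ext fun n ↦ ?_
  have hn : (Submodule.Quotient.mk (f (u n)) : N ⧸ (I ^ n • ⊤ : Submodule R N)) = 0 :=
    congrArg (fun z ↦ z.val n) ((AdicCompletion.map_mk I f u).symm.trans hx)
  exact (Submodule.Quotient.mk_eq_zero _).2 (hf n _ ((Submodule.Quotient.mk_eq_zero _).1 hn))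

theorem exists_eq_pow_smul_of_map_eq_pow_smul {f : M →ₗ[R] N} {y : R} (hy : IsSMulRegular N y)
    (hf : ∀ x z, f x = y • z → ∃ x', x = y • x') (n : ℕ) {x : M} {z : N}
    (hx : f x = y ^ n • z) : ∃ x', x = y ^ n • x' := by
  induction n generalizing x with
  | zero => exact ⟨x, by simp⟩
  | succ n ih =>
    rw [pow_succ', mul_smul] at hx
    obtain ⟨x', rfl⟩ := hf x _ hx
    obtain ⟨x'', rfl⟩ := ih (hy ((map_smul f y x').symm.trans hx))
    exact ⟨x'', by rw [pow_succ', mul_smul]⟩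

theorem adicCompletion_map_bijective_of_isSMulRegular {f : M →ₗ[R] N} {y : R}
    (hy : IsSMulRegular N y) (hinj : ∀ x z, f x = y • z → ∃ x', x = y • x')
    (hsurj : ∀ z, ∃ x z', z = f x + y • z') :
    Function.Bijective (AdicCompletion.map (Ideal.span {y}) f) := by
  constructor
  · refine adicCompletion_map_injective fun n x hx ↦ ?_
    obtain ⟨z, hz⟩ := mem_span_singleton_pow_smul_top.1 hx
    obtain ⟨x', hx'⟩ := exists_eq_pow_smul_of_map_eq_pow_smul hy hinj n hz.symm
    exact mem_span_singleton_pow_smul_top.2 ⟨x', hx'.symm⟩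
  · apply AdicCompletion.map_surjective_of_mkQ_comp_surjective
    intro q
    obtain ⟨z, rfl⟩ := Submodule.Quotient.mk_surjective _ q
    obtain ⟨x, z', rfl⟩ := hsurj z
    refine ⟨x, ((Submodule.Quotient.eq _).2 ?_).symm⟩
    rw [add_sub_cancel_left]
    exact Submodule.smul_mem_smul (Ideal.mem_span_singleton_self y) trivial

theorem nonempty_adicCompletion_linearEquiv_pi {ι : Type*} [Finite ι] {N : ι → Type*}
    [∀ i, AddCommGroup (N i)] [∀ i, Module R (N i)] {y : R}
    [∀ i, IsAdicComplete (Ideal.span {y}) (N i)] {f : M →ₗ[R] ∀ i, N i}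
    (hy : ∀ i, IsSMulRegular (N i) y) (hinj : ∀ x z, f x = y • z → ∃ x', x = y • x')
    (hsurj : ∀ z, ∃ x z', z = f x + y • z') :
    Nonempty (AdicCompletion (Ideal.span {y}) M ≃ₗ[R] ∀ i, N i) := by
  classical
  have := Fintype.ofFinite ι
  have hbij := adicCompletion_map_bijective_of_isSMulRegular (Pi.isSMulRegular_iff.2 hy) hinj hsurj
  exact ⟨(LinearEquiv.ofBijective _ hbij).restrictScalars R ≪≫ₗ
    (AdicCompletion.piEquivOfFintype _ N).restrictScalars R ≪≫ₗ
    LinearEquiv.piCongrRight fun i ↦ (AdicCompletion.ofLinearEquiv (Ideal.span {y}) (N i)).symm⟩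

theorem isPrecomplete_of_surjective (I : Ideal R) [IsPrecomplete I M] {f : M →ₗ[R] N}
    (hf : Function.Surjective f) : IsPrecomplete I N := by
  rw [← AdicCompletion.of_surjective_iff]
  intro u
  obtain ⟨v, rfl⟩ := AdicCompletion.map_surjective I hf u
  obtain ⟨x, rfl⟩ := AdicCompletion.of_surjective I M v
  exact ⟨f x, (AdicCompletion.map_of I f x).symm⟩

theorem isAdicComplete_span_singleton_of_algebraMap_eq {A B S : Type*} [CommRing A] [CommRing B]
    [CommRing S] [Algebra A S] [Algebra B S] {a : A} {b : B}
    (hab : algebraMap A S a = algebraMap B S b) [IsAdicComplete (Ideal.span {a}) S] :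
    IsAdicComplete (Ideal.span {b}) S := by
  rw [← IsAdicComplete.map_algebraMap_iff (S := S), Ideal.map_span, Set.image_singleton, ← hab,
    ← Set.image_singleton, ← Ideal.map_span, IsAdicComplete.map_algebraMap_iff]
  infer_instance

end AdicCompletion

section Quotient

variable {S T : Type*} [CommRing S] [CommRing T]

theorem mk_dvd_mk_iff {ε : T →+* S} (hε : Function.Surjective ε) {x : T}
    (hx : ∀ t, x ∣ t ↔ ε t = 0) (g s : T) :
    Ideal.Quotient.mk (Ideal.span {g}) x ∣ Ideal.Quotient.mk (Ideal.span {g}) s ↔ ε g ∣ ε s := by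
  constructor
  · rintro ⟨q, hq⟩
    obtain ⟨t, rfl⟩ := Ideal.Quotient.mk_surjective q
    rw [← map_mul, Ideal.Quotient.eq, Ideal.mem_span_singleton] at hq
    simpa [(hx x).1 dvd_rfl] using map_dvd ε hq
  · rintro ⟨w, hw⟩
    obtain ⟨v, rfl⟩ := hε w
    obtain ⟨t, ht⟩ := (hx (s - g * v)).2 (by rw [map_sub, map_mul, hw, sub_self])
    refine ⟨Ideal.Quotient.mk _ t, ?_⟩
    rw [← map_mul, ← ht, Ideal.Quotient.eq, sub_sub_cancel]
    exact Ideal.mul_mem_right _ _ (Ideal.mem_span_singleton_self g)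

end Quotient

section PowerSeries

open scoped PowerSeries

variable {A : Type*} [CommRing A]

theorem mk_powerSeries_X_dvd_mk_iff (g s : A⟦X⟧) :
    Ideal.Quotient.mk (Ideal.span {g}) PowerSeries.X ∣ Ideal.Quotient.mk (Ideal.span {g}) s ↔
      PowerSeries.constantCoeff g ∣ PowerSeries.constantCoeff s :=
  mk_dvd_mk_iff PowerSeries.constantCoeff_surj (fun _ ↦ PowerSeries.X_dvd_iff) g s

theorem mk_polynomial_X_sub_C_dvd_mk_iff (a : A) (g s : A[X]) :
    Ideal.Quotient.mk (Ideal.span {g}) (X - C a) ∣ Ideal.Quotient.mk (Ideal.span {g}) s ↔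
      g.eval a ∣ s.eval a :=
  mk_dvd_mk_iff (ε := evalRingHom a) (fun r ↦ ⟨C r, eval_C⟩) (fun _ ↦ dvd_iff_isRoot) g s

theorem isSMulRegular_powerSeries_quotient_X {g : A⟦X⟧}
    (hg : PowerSeries.constantCoeff g ∈ nonZeroDivisors A) :
    IsSMulRegular (A⟦X⟧ ⧸ Ideal.span {g}) (Ideal.Quotient.mk (Ideal.span {g}) PowerSeries.X) := by
  refine isSMulRegular_iff_right_eq_zero_of_smul.2 fun q hq ↦ ?_
  obtain ⟨u, rfl⟩ := Ideal.Quotient.mk_surjective q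
  obtain ⟨v, hv : PowerSeries.X * u = g * v⟩ :=
    Ideal.mem_span_singleton.1 (Ideal.Quotient.eq_zero_iff_mem.1 hq)
  have hv0 : PowerSeries.constantCoeff v = 0 := by
    have h := congrArg PowerSeries.constantCoeff hv
    rw [map_mul, map_mul, PowerSeries.constantCoeff_X, zero_mul] at h
    exact (mul_left_mem_nonZeroDivisors_eq_zero_iff hg).1 h.symm
  obtain ⟨w, rfl⟩ := PowerSeries.X_dvd_iff.2 hv0
  refine Ideal.Quotient.eq_zero_iff_mem.2 (Ideal.mem_span_singleton.2 ⟨w, ?_⟩)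
  exact PowerSeries.X_mul_cancel (hv.trans (mul_left_comm _ _ _))

instance isAdicComplete_powerSeries_quotient [IsNoetherianRing A] [IsLocalRing A] (g : A⟦X⟧) :
    IsAdicComplete (Ideal.span {(PowerSeries.X : A⟦X⟧)}) (A⟦X⟧ ⧸ Ideal.span {g}) where
  toIsHausdorff := IsHausdorff.of_isLocalRing _ _ <| by
    rw [Ne, Ideal.span_singleton_eq_top, PowerSeries.isUnit_iff_constantCoeff,
      PowerSeries.constantCoeff_X]
    exact not_isUnit_zero
  toIsPrecomplete := isPrecomplete_of_surjective _ (Submodule.mkQ_surjective (Ideal.span {g}))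

theorem nonempty_powerSeries_quotient_linearEquiv [IsLocalRing A]
    [IsAdicComplete (IsLocalRing.maximalIdeal A) A] {g : A⟦X⟧} {d : ℕ}
    (hg : (g.map (IsLocalRing.residue A)).order = d) :
    Nonempty ((A⟦X⟧ ⧸ Ideal.span {g}) ≃ₗ[A] (Fin d → A)) := by
  have hg0 : g.map (IsLocalRing.residue A) ≠ 0 := by
    rw [Ne, ← PowerSeries.order_eq_top, hg]
    exact ENat.natCast_ne_top d
  obtain ⟨P, u, H⟩ := PowerSeries.exists_isWeierstrassFactorization hg0
  have hdeg : P.natDegree = d := by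
    rw [H.natDegree_eq_toNat_order_map, hg, ENat.toNat_natCast]
  let b := AdjoinRoot.powerBasis' H.isDistinguishedAt.monic
  have hdim : b.dim = d := (AdjoinRoot.powerBasis'_dim _).trans hdeg
  exact ⟨H.algEquivQuotient.symm.toLinearEquiv ≪≫ₗ b.basis.equivFun ≪≫ₗ
    LinearEquiv.funCongrLeft A A (finCongr hdim.symm)⟩

end PowerSeries

section LocalFactor

open scoped PowerSeries

variable {R : Type*} [CommRing R] (A : Type*) [CommRing A] [Algebra R A] (f : R[X]) (a : R)

/-- The expansion `f(X + a)` of a polynomial `f` over `R` at the point `a`, as a power series over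
the `R`-algebra `A`. -/
noncomputable def taylorSeries : R[X] →ₐ[R] A⟦X⟧ :=
  (coeToPowerSeries.algHom A).comp (taylorAlgHom a)

theorem taylorSeries_apply : taylorSeries A a f = (taylor a f : R⟦X⟧).map (algebraMap R A) :=
  rfl

theorem taylorSeries_X_sub_C : taylorSeries A a (X - C a) = PowerSeries.X := by
  simp [taylorSeries_apply]

theorem constantCoeff_taylorSeries :
    PowerSeries.constantCoeff (taylorSeries A a f) = algebraMap R A (f.eval a) := by
  rw [taylorSeries_apply, ← PowerSeries.coeff_zero_eq_constantCoeff_apply, PowerSeries.coeff_map,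
    coeff_coe, taylor_coeff_zero]

/-- The factor `A⟦X⟧ / (f(X + a))` of the formal completion of `R[X] / (f)` at `X = a` that is
seen by the `R`-algebra `A`. -/
abbrev LocalFactor : Type _ :=
  A⟦X⟧ ⧸ Ideal.span {taylorSeries A a f}

noncomputable instance : Algebra (R[X] ⧸ Ideal.span {f}) (LocalFactor A f a) :=
  (Ideal.Quotient.lift (Ideal.span {f})
    ((Ideal.Quotient.mk (Ideal.span {taylorSeries A a f})).comp (taylorSeries A a : R[X] →+* A⟦X⟧))
    (fun _ hs ↦ Ideal.Quotient.eq_zero_iff_dvd _ _ |>.2 <|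
      map_dvd (taylorSeries A a) (Ideal.mem_span_singleton.1 hs))).toAlgebra

theorem algebraMap_localFactor_mk (s : R[X]) :
    algebraMap (R[X] ⧸ Ideal.span {f}) (LocalFactor A f a) (Ideal.Quotient.mk _ s) =
      Ideal.Quotient.mk _ (taylorSeries A a s) :=
  rfl

instance [IsNoetherianRing A] [IsLocalRing A] : IsAdicComplete
    (Ideal.span {Ideal.Quotient.mk (Ideal.span {f}) (X - C a)}) (LocalFactor A f a) :=
  isAdicComplete_span_singleton_of_algebraMap_eq (a := (PowerSeries.X : A⟦X⟧)) <| by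
    rw [algebraMap_localFactor_mk, taylorSeries_X_sub_C]; rfl

theorem mk_X_sub_C_smul_localFactor (z : LocalFactor A f a) :
    Ideal.Quotient.mk (Ideal.span {f}) (X - C a) • z = Ideal.Quotient.mk _ PowerSeries.X * z := by
  rw [Algebra.smul_def, algebraMap_localFactor_mk, taylorSeries_X_sub_C]

theorem isSMulRegular_localFactor (hf : algebraMap R A (f.eval a) ∈ nonZeroDivisors A) :
    IsSMulRegular (LocalFactor A f a) (Ideal.Quotient.mk (Ideal.span {f}) (X - C a)) := by
  rw [← constantCoeff_taylorSeries] at hf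
  intro z w hzw
  simp only [mk_X_sub_C_smul_localFactor] at hzw
  exact isSMulRegular_powerSeries_quotient_X hf hzw

section Pi

variable {R : Type*} [CommRing R] {f : R[X]} {a : R} {ι : Type*} {A : ι → Type*}
  [∀ i, CommRing (A i)] [∀ i, Algebra R (A i)]

theorem eq_smul_of_linearMap_localFactors_eq_smul
    (hinj : ∀ r : R, (∀ i, algebraMap R (A i) (f.eval a) ∣ algebraMap R (A i) r) → f.eval a ∣ r)
    {x : R[X] ⧸ Ideal.span {f}} {z : ∀ i, LocalFactor (A i) f a}
    (hx : Algebra.linearMap _ (∀ i, LocalFactor (A i) f a) x =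
      Ideal.Quotient.mk (Ideal.span {f}) (X - C a) • z) :
    ∃ x', x = Ideal.Quotient.mk (Ideal.span {f}) (X - C a) • x' := by
  obtain ⟨s, rfl⟩ := Ideal.Quotient.mk_surjective x
  refine (mk_polynomial_X_sub_C_dvd_mk_iff a f s).2 (hinj _ fun i ↦ ?_)
  rw [← constantCoeff_taylorSeries, ← constantCoeff_taylorSeries, ← mk_powerSeries_X_dvd_mk_iff]
  exact ⟨z i, (congrFun hx i).trans (mk_X_sub_C_smul_localFactor (A i) f a (z i))⟩

theorem exists_eq_linearMap_localFactors_add_smul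
    (hsurj : ∀ c : ∀ i, A i, ∃ r : R, ∀ i,
      algebraMap R (A i) (f.eval a) ∣ c i - algebraMap R (A i) r)
    (z : ∀ i, LocalFactor (A i) f a) :
    ∃ x z', z = Algebra.linearMap (R[X] ⧸ Ideal.span {f}) (∀ i, LocalFactor (A i) f a) x +
      Ideal.Quotient.mk (Ideal.span {f}) (X - C a) • z' := by
  choose w hw using fun i ↦ Ideal.Quotient.mk_surjective (z i)
  obtain ⟨r, hr⟩ := hsurj fun i ↦ PowerSeries.constantCoeff (w i)
  have hdvd (i) : Ideal.Quotient.mk (Ideal.span {taylorSeries (A i) a f}) PowerSeries.X ∣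
      Ideal.Quotient.mk _ (w i - taylorSeries (A i) a (C r)) := by
    rw [mk_powerSeries_X_dvd_mk_iff, map_sub, constantCoeff_taylorSeries,
      constantCoeff_taylorSeries, eval_C]
    exact hr i
  choose z' hz' using hdvd
  refine ⟨Ideal.Quotient.mk _ (C r), z', funext fun i ↦ ?_⟩
  rw [← hw, Pi.add_apply, Pi.smul_apply, mk_X_sub_C_smul_localFactor, ← hz', map_sub]
  exact (add_sub_cancel _ _).symm

theorem nonempty_adicCompletion_linearEquiv_pi_localFactor [Finite ι]
    [∀ i, IsNoetherianRing (A i)] [∀ i, IsLocalRing (A i)]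
    (hreg : ∀ i, algebraMap R (A i) (f.eval a) ∈ nonZeroDivisors (A i))
    (hinj : ∀ r : R, (∀ i, algebraMap R (A i) (f.eval a) ∣ algebraMap R (A i) r) → f.eval a ∣ r)
    (hsurj : ∀ c : ∀ i, A i, ∃ r : R, ∀ i,
      algebraMap R (A i) (f.eval a) ∣ c i - algebraMap R (A i) r) :
    Nonempty (AdicCompletion (Ideal.span {Ideal.Quotient.mk (Ideal.span {f}) (X - C a)})
      (R[X] ⧸ Ideal.span {f}) ≃ₗ[R[X] ⧸ Ideal.span {f}] ∀ i, LocalFactor (A i) f a) :=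
  nonempty_adicCompletion_linearEquiv_pi (fun i ↦ isSMulRegular_localFactor (A i) f a (hreg i))
    (fun _ _ ↦ eq_smul_of_linearMap_localFactors_eq_smul hinj)
    (exists_eq_linearMap_localFactors_add_smul hsurj)

end Pi

theorem map_taylorSeries {R A B : Type*} [CommRing R] [CommRing A] [CommRing B] [Algebra R A]
    [Algebra R B] [Algebra A B] [IsScalarTower R A B] (f : R[X]) (a : R) :
    (taylorSeries A a f).map (algebraMap A B) = taylorSeries B a f := by
  rw [taylorSeries_apply, taylorSeries_apply, IsScalarTower.algebraMap_eq R A B,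
    PowerSeries.map_comp, RingHom.comp_apply]

theorem order_coe {K : Type*} [Semiring K] {f : K[X]} (hf : f ≠ 0) :
    (f : K⟦X⟧).order = f.natTrailingDegree := by
  refine PowerSeries.order_eq_nat.2 ⟨?_, fun i hi ↦ ?_⟩
  · rwa [coeff_coe, ← trailingCoeff, Ne, trailingCoeff_eq_zero]
  · rw [coeff_coe, coeff_eq_zero_of_lt_natTrailingDegree hi]

theorem order_taylorSeries {R K : Type*} [CommRing R] [CommRing K] [Algebra R K] {f : R[X]} (a : R)
    (hf : f.map (algebraMap R K) ≠ 0) : (taylorSeries K a f).order =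
      (f.map (algebraMap R K)).rootMultiplicity (algebraMap R K a) := by
  rw [taylorSeries_apply, ← polynomial_map_coe, map_taylor, rootMultiplicity_eq_natTrailingDegree,
    ← taylor_apply, order_coe ((taylor_eq_zero _ _).not.2 hf)]

theorem nonempty_localFactor_linearEquiv {R A : Type*} [CommRing R] [CommRing A] [Algebra R A]
    [IsLocalRing A] [IsAdicComplete (IsLocalRing.maximalIdeal A) A] {f : R[X]} {a : R} {d : ℕ}
    (hf : f.map (algebraMap R (IsLocalRing.ResidueField A)) ≠ 0)
    (hd : (f.map (algebraMap R (IsLocalRing.ResidueField A))).rootMultiplicity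
      (algebraMap R (IsLocalRing.ResidueField A) a) = d) :
    Nonempty (LocalFactor A f a ≃ₗ[A] (Fin d → A)) := by
  apply nonempty_powerSeries_quotient_linearEquiv
  rw [← IsLocalRing.ResidueField.algebraMap_eq, map_taylorSeries, order_taylorSeries a hf, hd]

end LocalFactor

section Chebyshev

theorem degree_chebyshev_S (R : Type*) [CommRing R] [Nontrivial R] :
    ∀ n : ℕ, (Chebyshev.S R n).degree = n
  | 0 => by simp
  | 1 => by simp
  | n + 2 => by
    have hdeg : (X * Chebyshev.S R (n + 1 : ℕ)).degree = ((n + 2 : ℕ) : WithBot ℕ) := by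
      rw [X_mul, degree_mul_X, degree_chebyshev_S R (n + 1)]
      rfl
    rw [Nat.cast_add n 2, Nat.cast_ofNat, Chebyshev.S_add_two, ← Nat.cast_succ,
      degree_sub_eq_left_of_degree_lt, hdeg]
    rw [hdeg, degree_chebyshev_S R n, Nat.cast_lt]
    omega

theorem chebyshev_S_sub_one_ne_zero (R : Type*) [CommRing R] [Nontrivial R] {n : ℕ} (hn : n ≠ 0) :
    Chebyshev.S R (n - 1) ≠ 0 := by
  obtain ⟨k, rfl⟩ := Nat.exists_eq_succ_of_ne_zero hn
  rw [Nat.cast_succ, add_sub_cancel_right, ← degree_ne_bot, degree_chebyshev_S]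
  exact WithBot.coe_ne_bot

theorem chebyshev_C_sq_sub_four (R : Type*) [CommRing R] (n : ℤ) :
    Chebyshev.C R n ^ 2 - 4 = (X ^ 2 - 4) * Chebyshev.S R (n - 1) ^ 2 := by
  have hS := Chebyshev.S_sq_add_S_sq R (n - 1)
  rw [sub_add_cancel] at hS
  rw [Chebyshev.C_eq_S_sub_X_mul_S R n]
  linear_combination 4 * hS

theorem eval_two_chebyshev_S_ne_zero (R : Type*) [CommRing R] {p : ℕ} [CharP R p] {n : ℕ}
    (hn : ¬ p ∣ n) : (Chebyshev.S R (n - 1)).eval 2 ≠ 0 := by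
  rw [Chebyshev.S_eval_two, Int.cast_sub, Int.cast_natCast, Int.cast_one, sub_add_cancel]
  exact (CharP.cast_eq_zero_iff R p n).not.2 hn

section CharP

variable (R : Type*) [CommRing R] (p : ℕ) [Fact p.Prime] [CharP R p]

theorem chebyshev_C_prime_pow (i : ℕ) : Chebyshev.C R (p ^ i) = X ^ p ^ i := by
  induction i with
  | zero => simp
  | succ i ih =>
    rw [pow_succ, Chebyshev.C_mul, ih, ← dickson_one_one_eq_chebyshev_C, dickson_one_one_charP,
      X_pow_comp, ← pow_mul, mul_comm, pow_succ]

theorem X_sq_sub_four_mul_chebyshev_S_sq (i : ℕ) (n : ℤ) :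
    (X ^ 2 - 4) * Chebyshev.S R (p ^ i * n - 1) ^ 2 =
      ((X ^ 2 - 4) * Chebyshev.S R (n - 1) ^ 2) ^ p ^ i := by
  have hfour : (4 : R[X]) ^ p ^ i = 4 := by
    simpa [iterateFrobenius_def] using map_ofNat (iterateFrobenius R[X] p i) 4
  rw [← chebyshev_C_sq_sub_four, ← chebyshev_C_sq_sub_four, sub_pow_expChar_pow, hfour,
    Chebyshev.C_mul, chebyshev_C_prime_pow, X_pow_comp, pow_right_comm]

theorem X_sq_sub_four_mul_chebyshev_S_sq_eq_ordCompl (m : ℕ) :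
    (X ^ 2 - 4) * Chebyshev.S R (m - 1) ^ 2 =
      ((X ^ 2 - 4) * Chebyshev.S R ((m / p ^ m.factorization p : ℕ) - 1) ^ 2) ^
        p ^ m.factorization p := by
  rw [← X_sq_sub_four_mul_chebyshev_S_sq, ← Nat.cast_pow, ← Nat.cast_mul,
    Nat.ordProj_mul_ordCompl_eq_self]

theorem two_eq_neg_two_iff : (2 : R) = -2 ↔ p = 2 := by
  have hp : p.Prime := Fact.out
  have hfour : (2 : R) + 2 = ((2 ^ 2 : ℕ) : R) := by norm_num
  rw [eq_neg_iff_add_eq_zero, hfour, CharP.cast_eq_zero_iff R p,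
    hp.prime.dvd_pow_iff_dvd two_ne_zero, Nat.prime_dvd_prime_iff_eq hp Nat.prime_two]

end CharP

theorem rootMultiplicity_pow {R : Type*} [CommRing R] [IsDomain R] (f : R[X]) (a : R) (n : ℕ) :
    (f ^ n).rootMultiplicity a = n * f.rootMultiplicity a := by
  classical
  rw [← count_roots, roots_pow, Multiset.count_nsmul, count_roots]

variable (K : Type*) [CommRing K] [IsDomain K] (p : ℕ) [Fact p.Prime] [CharP K p]

theorem rootMultiplicity_X_sq_sub_four :
    (X ^ 2 - 4 : K[X]).rootMultiplicity 2 = if p = 2 then 2 else 1 := by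
  classical
  have hfac : (X ^ 2 - 4 : K[X]) = (X - C 2) * (X - C (-2)) := by
    rw [C_neg, C_ofNat]
    ring
  rw [hfac, rootMultiplicity_mul (mul_ne_zero (X_sub_C_ne_zero _) (X_sub_C_ne_zero _)),
    rootMultiplicity_X_sub_C_self, rootMultiplicity_X_sub_C]
  simp only [two_eq_neg_two_iff K p]
  split_ifs <;> rfl

theorem rootMultiplicity_X_sq_sub_four_mul_sq {f : K[X]} (hf : f ≠ 0) :
    ((X ^ 2 - 4) * f ^ 2).rootMultiplicity 2 =
      (if p = 2 then 2 else 1) + 2 * f.rootMultiplicity 2 := by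
  have hX : (X ^ 2 - 4 : K[X]) ≠ 0 := X_pow_sub_C_ne_zero two_pos 4
  rw [rootMultiplicity_mul (mul_ne_zero hX (pow_ne_zero 2 hf)), rootMultiplicity_pow,
    rootMultiplicity_X_sq_sub_four K p]

theorem rootMultiplicity_chebyshev_S {m : ℕ} (hm : m ≠ 0) :
    (Chebyshev.S K (m - 1)).rootMultiplicity 2 = deltaPM p m := by
  have hmp : m / p ^ m.factorization p ≠ 0 := (Nat.ordCompl_pos p hm).ne'
  have hpow := congrArg (rootMultiplicity 2) (X_sq_sub_four_mul_chebyshev_S_sq_eq_ordCompl K p m)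
  rw [rootMultiplicity_pow,
    rootMultiplicity_X_sq_sub_four_mul_sq K p (chebyshev_S_sub_one_ne_zero K hm),
    rootMultiplicity_X_sq_sub_four_mul_sq K p (chebyshev_S_sub_one_ne_zero K hmp),
    rootMultiplicity_eq_zero
      (eval_two_chebyshev_S_ne_zero K (Nat.not_dvd_ordCompl Fact.out hm))] at hpow
  unfold deltaPM
  split_ifs at hpow ⊢ with h2
  · subst h2; omega
  · omega

end Chebyshev

section PadicInt

local instance fact_prime_primeFactors (n : ℕ) (p : n.primeFactors) : Fact (p : ℕ).Prime :=
  ⟨Nat.prime_of_mem_primeFactors p.2⟩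

theorem associated_natCast_padicInt {p : ℕ} [Fact p.Prime] {n : ℕ} (hn : n ≠ 0) :
    Associated (n : ℤ_[p]) (p ^ n.factorization p) := by
  have hu : IsUnit ((n / p ^ n.factorization p : ℕ) : ℤ_[p]) := by
    rw [PadicInt.isUnit_iff, PadicInt.norm_natCast_eq_one_iff]
    exact Nat.coprime_ordCompl Fact.out hn
  have hmul : (n : ℤ_[p]) = p ^ n.factorization p * (n / p ^ n.factorization p : ℕ) :=
    mod_cast (Nat.ordProj_mul_ordCompl_eq_self n p).symm
  rw [hmul]
  exact associated_mul_unit_left _ _ hu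

theorem natCast_dvd_intCast_padicInt_iff {p : ℕ} [Fact p.Prime] {n : ℕ} (hn : n ≠ 0) (k : ℤ) :
    (n : ℤ_[p]) ∣ k ↔ (p : ℤ) ^ n.factorization p ∣ k := by
  rw [(associated_natCast_padicInt hn).dvd_iff_dvd_left, PadicInt.pow_p_dvd_int_iff]

theorem natCast_dvd_of_forall_padicInt {n : ℕ} (hn : n ≠ 0) {k : ℤ}
    (hk : ∀ p : n.primeFactors, (n : ℤ_[p]) ∣ k) : (n : ℤ) ∣ k := by
  have hcop (p q : n.primeFactors) (h : p ≠ q) :=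
    Nat.isCoprime_iff_coprime.2 (n.pairwise_coprime_pow_primeFactors_factorization h)
  have hprod : ∏ p : n.primeFactors, (((p : ℕ) ^ n.factorization p : ℕ) : ℤ) = n := by
    rw [← Nat.cast_prod, ← Nat.prod_primeFactors_coe_pow_factorization hn]
  rw [← hprod]
  refine Fintype.prod_dvd_of_coprime hcop fun p ↦ ?_
  simpa using (natCast_dvd_intCast_padicInt_iff hn k).1 (hk p)

theorem exists_intCast_natCast_dvd_sub_padicInt {n : ℕ} (hn : n ≠ 0)
    (c : ∀ p : n.primeFactors, ℤ_[p]) : ∃ k : ℤ, ∀ p : n.primeFactors, (n : ℤ_[p]) ∣ c p - k := by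
  have hcop : Pairwise (Function.onFun IsCoprime fun p : n.primeFactors ↦
      Ideal.span {(((p : ℕ) ^ n.factorization p : ℕ) : ℤ)}) := fun p q h ↦
    (Ideal.isCoprime_span_singleton_iff _ _).2 <|
      Nat.isCoprime_iff_coprime.2 (n.pairwise_coprime_pow_primeFactors_factorization h)
  obtain ⟨k, hk⟩ := Ideal.exists_forall_sub_mem_ideal hcop fun p ↦
    ((c p).appr (n.factorization p) : ℤ)
  refine ⟨k, fun p ↦ ?_⟩
  have happr : (n : ℤ_[p]) ∣ c p - ((c p).appr (n.factorization p) : ℤ) := by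
    rw [(associated_natCast_padicInt hn).dvd_iff_dvd_left, Int.cast_natCast]
    exact Ideal.mem_span_singleton.1 (PadicInt.appr_spec _ _)
  have hcrt : (n : ℤ_[p]) ∣ (k - (c p).appr (n.factorization p) : ℤ) := by
    rw [natCast_dvd_intCast_padicInt_iff hn]
    simpa using Ideal.mem_span_singleton.1 (hk p)
  simpa using dvd_sub happr hcrt

instance (p : ℕ) [Fact p.Prime] : CharP (IsLocalRing.ResidueField ℤ_[p]) p :=
  charP_of_injective_ringHom
    (f := (PadicInt.residueField (p := p)).symm.toRingHom) PadicInt.residueField.symm.injective p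

theorem nonempty_adicCompletion_int_addEquiv {f : ℤ[X]} {a : ℤ} {n : ℕ} (hn : n ≠ 0)
    (hfa : f.eval a = n) {d : n.primeFactors → ℕ}
    (hf : ∀ p : n.primeFactors, f.map (Int.castRingHom (IsLocalRing.ResidueField ℤ_[p])) ≠ 0)
    (hd : ∀ p : n.primeFactors,
      (f.map (Int.castRingHom (IsLocalRing.ResidueField ℤ_[p]))).rootMultiplicity ↑a = d p) :
    Nonempty (AdicCompletion (Ideal.span {Ideal.Quotient.mk (Ideal.span {f}) (X - C a)})
      (ℤ[X] ⧸ Ideal.span {f}) ≃+ ∀ p : n.primeFactors, Fin (d p) → ℤ_[p]) := by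
  have hcast (p : n.primeFactors) : algebraMap ℤ ℤ_[p] (f.eval a) = n := by
    rw [hfa, map_natCast]
  obtain ⟨e⟩ := nonempty_adicCompletion_linearEquiv_pi_localFactor
    (A := fun p : n.primeFactors ↦ ℤ_[p]) (f := f) (a := a)
    (fun p ↦ mem_nonZeroDivisors_of_ne_zero ((hcast p).trans_ne (Nat.cast_ne_zero.2 hn)))
    (fun k hk ↦ hfa ▸ natCast_dvd_of_forall_padicInt hn fun p ↦ hcast p ▸ hk p)
    (fun c ↦ by simpa only [hcast, eq_intCast] using exists_intCast_natCast_dvd_sub_padicInt hn c)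
  have hfactor (p : n.primeFactors) :
      Nonempty (LocalFactor ℤ_[p] f a ≃ₗ[ℤ_[p]] (Fin (d p) → ℤ_[p])) := by
    have hmap : algebraMap ℤ (IsLocalRing.ResidueField ℤ_[p]) = Int.castRingHom _ :=
      RingHom.ext_int _ _
    exact nonempty_localFactor_linearEquiv (hmap ▸ hf p) (hmap ▸ hd p)
  exact ⟨e.toAddEquiv.trans <| AddEquiv.piCongrRight fun p ↦ (hfactor p).some.toAddEquiv⟩

end PadicInt

section SymPoly

theorem symPoly_eq_chebyshev_S : ∀ n : ℕ, symPoly n = Chebyshev.S ℤ n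
  | 0 => by simp [symPoly]
  | 1 => by simp [symPoly]
  | n + 2 => by
    rw [symPoly, symPoly_eq_chebyshev_S (n + 1), symPoly_eq_chebyshev_S n, Nat.cast_add n 2,
      Nat.cast_ofNat, Chebyshev.S_add_two, Nat.cast_succ]

variable {m : ℕ}

theorem map_symPoly_pred (R : Type*) [CommRing R] (hm : m ≠ 0) :
    (symPoly (m - 1)).map (Int.castRingHom R) = Chebyshev.S R (m - 1) := by
  rw [symPoly_eq_chebyshev_S, Chebyshev.map_S, Nat.cast_pred (Nat.pos_of_ne_zero hm)]

theorem eval_two_symPoly_pred (hm : m ≠ 0) : (symPoly (m - 1)).eval 2 = m := by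
  rw [symPoly_eq_chebyshev_S, Chebyshev.S_eval_two, Int.cast_id,
    Nat.cast_pred (Nat.pos_of_ne_zero hm), sub_add_cancel]

end SymPoly

/-- Proposition 1.1: the `I`-adic completion of `V_m = ℤ[x]/(Sym_{m-1})` at the ideal
generated by `x - 2` is, as an abelian group, the product over primes `p ∣ m` of
`δ(p,m)` copies of the `p`-adic integers. -/
theorem stmt0 (m : ℕ) (hm : 2 ≤ m) :
    Nonempty
      ((AdicCompletion
          (Ideal.span {Ideal.Quotient.mk (Ideal.span {symPoly (m-1)}) (X - 2)})
          (ℤ[X] ⧸ Ideal.span {symPoly (m-1)})) ≃+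
        ((p : {p : ℕ // p ∈ m.primeFactors}) →
          Fin (deltaPM p.1 m) →
            @PadicInt p.1 (Fact.mk (Nat.prime_of_mem_primeFactors p.2)))) := by
  have hm0 : m ≠ 0 := by omega
  have hprime := fact_prime_primeFactors m
  rw [← C_ofNat 2]
  refine nonempty_adicCompletion_int_addEquiv hm0 (eval_two_symPoly_pred hm0)
    (fun p ↦ ?_) (fun p ↦ ?_)
  · rw [map_symPoly_pred _ hm0]
    exact chebyshev_S_sub_one_ne_zero _ hm0
  · rw [map_symPoly_pred _ hm0, Int.cast_ofNat]
    exact rootMultiplicity_chebyshev_S _ p hm0
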